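/- Let A, B, C be vertex subsets of a graph with C disjoint from A ∪ B, suppose the pair (A,C) is ε-regular of density d > 0 and the pair (B,C) is ε-regular of density d', and set ε' = 6ε/d. Then for all but at most ε'|A||B| pairs (a,b) ∈ A×B, the number codeg(a,b) of common neighbors of a and b in C satisfies (dd' − ε')|C| ≤ codeg(a,b) ≤ (dd' + ε')|C|. -/

import Mathlib

/-!
Regularity of `(B, C)` says that the degrees `deg(b, N)` into a fixed `N ⊆ C` with `|N| ≥ ε|C|`
average to `(d' ± ε)|N|` over every set of at least `ε|B|` vertices `b`. Hence at most `ε|B|`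
vertices can exceed this range, at most `ε|B|` can fall short of it, and so all but `2ε|B|`
vertices have `deg(b, N) = (d' ± ε)|N|`.

For `(A, C)` and `N = C`, this makes all but `2ε|A|` vertices `a ∈ A` typical: the neighborhood
`N` of `a` in `C` has size `(d ± ε)|C|`. If `|N| ≥ ε|C|`, the same fact for `(B, C)` and this `N`
gives `codeg(a, b) = deg(b, N) = (dd' ± 2ε)|C|` for all but `2ε|B|` vertices `b`. If `|N| < ε|C|`,
then `d|C| < 2ε|C|`, so `codeg(a, b)` and `dd'|C|` both lie in `[0, 2ε|C|]` for every `b`.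
Altogether at most `4ε|A||B|` pairs fail to have codegree `(dd' ± 2ε)|C|`, and
`2ε ≤ 4ε ≤ 6ε/d` because `d ≤ 1`.
-/

open Finset
open scoped Classical

/-- `eCnt G A B` is the number of ordered pairs `(u,v) ∈ A × B` with `uv` an edge of `G`. -/
noncomputable def eCnt {V : Type*} [Fintype V] (G : SimpleGraph V) (A B : Finset V) : ℕ :=
  ((A ×ˢ B).filter fun p => G.Adj p.1 p.2).card

/-- The edge density `d(A,B)` between vertex subsets `A` and `B`. -/
noncomputable def dens {V : Type*} [Fintype V] (G : SimpleGraph V) (A B : Finset V) : ℝ :=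
  eCnt G A B / (A.card * B.card)

/-- The pair `(A,B)` is `ε`-regular. -/
def RegPair {V : Type*} [Fintype V] (G : SimpleGraph V) (ε : ℝ) (A B : Finset V) : Prop :=
  ∀ A' ⊆ A, ∀ B' ⊆ B, ε * A.card ≤ A'.card → ε * B.card ≤ B'.card →
    |dens G A B - dens G A' B'| ≤ ε

/-- `codeg G a b C` is the number of common neighbors of `a` and `b` inside `C`. -/
noncomputable def codeg {V : Type*} [Fintype V] (G : SimpleGraph V) (a b : V)
    (C : Finset V) : ℕ :=
  (C.filter fun c => G.Adj a c ∧ G.Adj b c).card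

section Counting

variable {ι κ R : Type*} [CommRing R] [LinearOrder R] [IsStrictOrderedRing R]

lemma card_filter_lt_le_of_forall_sum_le {s : Finset ι} {f : ι → R} {c t : R} (ht : 0 ≤ t)
    (h : ∀ S ⊆ s, t ≤ #S → ∑ i ∈ S, f i ≤ #S * c) : (#{i ∈ s | c < f i} : R) ≤ t := by
  by_contra! hlt
  have hne : {i ∈ s | c < f i}.Nonempty := card_pos.mp (by exact_mod_cast ht.trans_lt hlt)
  have hsum : ∑ i ∈ s with c < f i, c < ∑ i ∈ s with c < f i, f i :=
    sum_lt_sum_of_nonempty hne fun i hi ↦ (mem_filter.mp hi).2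
  rw [sum_const, nsmul_eq_mul] at hsum
  exact (h _ (filter_subset _ _) hlt.le).not_gt hsum

lemma card_filter_lt_abs_le_of_forall_abs_sum_le {s : Finset ι} {f : ι → R} {c t : R}
    (ht : 0 ≤ t) (h : ∀ S ⊆ s, t ≤ #S → |∑ i ∈ S, f i| ≤ #S * c) :
    (#{i ∈ s | c < |f i|} : R) ≤ 2 * t := by
  have hpos : (#{i ∈ s | c < f i} : R) ≤ t :=
    card_filter_lt_le_of_forall_sum_le ht fun S hS hSt ↦ (le_abs_self _).trans (h S hS hSt)
  have hneg : (#{i ∈ s | c < -f i} : R) ≤ t :=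
    card_filter_lt_le_of_forall_sum_le ht fun S hS hSt ↦ by
      rw [sum_neg_distrib]
      exact (neg_le_abs _).trans (h S hS hSt)
  have hunion : #{i ∈ s | c < |f i|} ≤ #{i ∈ s | c < f i} + #{i ∈ s | c < -f i} := by
    simp only [lt_abs, filter_or]
    exact card_union_le _ _
  calc (#{i ∈ s | c < |f i|} : R) ≤ #{i ∈ s | c < f i} + #{i ∈ s | c < -f i} := by
        exact_mod_cast hunion
    _ ≤ 2 * t := by linarith

lemma card_filter_not_le_and_le_le {s : Finset ι} {f : ι → R} {m η δ c : R} (hηδ : η ≤ δ)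
    (hc : 0 ≤ c) :
    #{i ∈ s | ¬ ((m - δ) * c ≤ f i ∧ f i ≤ (m + δ) * c)} ≤ #{i ∈ s | η * c < |f i - m * c|} := by
  refine card_le_card (monotone_filter_right s fun i _ ↦ ?_)
  contrapose!
  intro hi
  have hηδc : η * c ≤ δ * c := mul_le_mul_of_nonneg_right hηδ hc
  constructor <;> linarith [abs_le.mp hi]

lemma card_filter_product_eq_sum (s : Finset ι) (t : Finset κ) (r : ι → κ → Prop) :
    #{p ∈ s ×ˢ t | r p.1 p.2} = ∑ i ∈ s, #{j ∈ t | r i j} := by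
  simp only [card_filter, sum_product]

lemma card_filter_product_le {s : Finset ι} {t : Finset κ} {P : ι → Prop} {r : ι → κ → Prop}
    {x y : R} (hy : 0 ≤ y) (hP : (#{i ∈ s | P i} : R) ≤ x * #s)
    (hr : ∀ i ∈ s, ¬ P i → (#{j ∈ t | r i j} : R) ≤ y * #t) :
    (#{p ∈ s ×ˢ t | r p.1 p.2} : R) ≤ (x + y) * (#s * #t) := by
  have hexc : ∑ i ∈ s with P i, (#{j ∈ t | r i j} : R) ≤ x * #s * #t :=
    calc ∑ i ∈ s with P i, (#{j ∈ t | r i j} : R) ≤ #{i ∈ s | P i} * #t := by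
          rw [← nsmul_eq_mul]
          exact sum_le_card_nsmul _ _ _ fun i _ ↦ by exact_mod_cast card_filter_le _ _
      _ ≤ x * #s * #t := by gcongr
  have hreg : ∑ i ∈ s with ¬ P i, (#{j ∈ t | r i j} : R) ≤ #s * (y * #t) :=
    calc ∑ i ∈ s with ¬ P i, (#{j ∈ t | r i j} : R) ≤ #{i ∈ s | ¬ P i} * (y * #t) := by
          rw [← nsmul_eq_mul]
          exact sum_le_card_nsmul _ _ _ fun i hi ↦ hr i (mem_filter.mp hi).1 (mem_filter.mp hi).2
      _ ≤ #s * (y * #t) := by gcongr; exact filter_subset _ _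
  rw [card_filter_product_eq_sum, Nat.cast_sum, ← sum_filter_add_sum_filter_not s P]
  linarith

lemma abs_sub_mul_mul_le {x n c d d' ε : R} (hε : 0 ≤ ε) (hd' : d' ∈ Set.Icc 0 1) (hnc : n ≤ c)
    (hn : |n - d * c| ≤ ε * c) (hx : |x - d' * n| ≤ ε * n) :
    |x - d * d' * c| ≤ 2 * ε * c :=
  calc |x - d * d' * c| = |(x - d' * n) + d' * (n - d * c)| := by ring_nf
    _ ≤ |x - d' * n| + d' * |n - d * c| := by
        rw [← abs_of_nonneg hd'.1, ← abs_mul, abs_of_nonneg hd'.1]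
        exact abs_add_le _ _
    _ ≤ ε * n + 1 * (ε * c) := by
        gcongr
        exact hd'.2
    _ ≤ 2 * ε * c := by nlinarith

lemma abs_sub_mul_mul_le_of_le {x n c d d' ε : R} (hc : 0 ≤ c) (hd : 0 ≤ d)
    (hd' : d' ∈ Set.Icc 0 1) (hx : x ∈ Set.Icc 0 n) (hnε : n ≤ ε * c)
    (hn : |n - d * c| ≤ ε * c) : |x - d * d' * c| ≤ 2 * ε * c := by
  have hle : d * d' * c ≤ d * c :=
    mul_le_mul_of_nonneg_right (mul_le_of_le_one_right hd hd'.2) hc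
  have hnonneg : 0 ≤ d * d' * c := mul_nonneg (mul_nonneg hd hd'.1) hc
  obtain ⟨hx0, hxn⟩ := hx
  refine abs_sub_le_of_nonneg_of_le hx0 ?_ hnonneg ?_ <;> linarith [neg_le_of_abs_le hn]

end Counting

section Graph

variable {V : Type*} {G : SimpleGraph V}

/-- The neighborhood `N(v) ∩ S` of `v` inside the vertex set `S`; its cardinality is the degree of
`v` into `S`. -/
noncomputable def nbhdIn (G : SimpleGraph V) (v : V) (S : Finset V) : Finset V :=
  {w ∈ S | G.Adj v w}

lemma nbhdIn_subset (v : V) (S : Finset V) : nbhdIn G v S ⊆ S :=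
  filter_subset _ _

variable [Fintype V]

lemma codeg_eq_card_nbhdIn_nbhdIn (a b : V) (C : Finset V) :
    codeg G a b C = #(nbhdIn G b (nbhdIn G a C)) := by
  rw [codeg, nbhdIn, nbhdIn, filter_filter]

lemma eCnt_eq_sum_card_nbhdIn (A B : Finset V) : eCnt G A B = ∑ a ∈ A, #(nbhdIn G a B) :=
  card_filter_product_eq_sum A B G.Adj

lemma dens_eq_edgeDensity (A B : Finset V) : dens G A B = (G.edgeDensity A B : ℝ) := by
  simp [_root_.dens, eCnt, G.edgeDensity_def, SimpleGraph.interedges, Rel.interedges]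

lemma dens_nonneg (A B : Finset V) : 0 ≤ dens G A B := by
  rw [dens_eq_edgeDensity]
  exact_mod_cast G.edgeDensity_nonneg A B

lemma dens_le_one (A B : Finset V) : dens G A B ≤ 1 := by
  rw [dens_eq_edgeDensity]
  exact_mod_cast G.edgeDensity_le_one A B

lemma dens_mul_card_mul_card (A B : Finset V) : dens G A B * (#A * #B) = eCnt G A B := by
  refine div_mul_cancel_of_imp fun h ↦ ?_
  have h0 : #(A ×ˢ B) = 0 := by rw [card_product]; exact_mod_cast h
  simp [eCnt, card_eq_zero.mp h0]

namespace RegPair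

variable {ε : ℝ} {A B C : Finset V}

lemma nonneg (h : RegPair G ε A B) : 0 ≤ ε := by
  by_contra! hε
  have hle (S : Finset V) : ε * #S ≤ #S := by nlinarith [(#S).cast_nonneg (α := ℝ)]
  exact hε.not_ge ((abs_nonneg _).trans (h A Subset.rfl B Subset.rfl (hle A) (hle B)))

lemma abs_sum_card_nbhdIn_sub_le (h : RegPair G ε B C) {S N : Finset V} (hS : S ⊆ B)
    (hN : N ⊆ C) (hSε : ε * #B ≤ #S) (hNε : ε * #C ≤ #N) :
    |∑ b ∈ S, ((#(nbhdIn G b N) : ℝ) - dens G B C * #N)| ≤ #S * (ε * #N) := by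
  have hsum : ∑ b ∈ S, ((#(nbhdIn G b N) : ℝ) - dens G B C * #N)
      = (dens G S N - dens G B C) * (#S * #N) := by
    rw [sum_sub_distrib, sum_const, nsmul_eq_mul, ← Nat.cast_sum, ← eCnt_eq_sum_card_nbhdIn,
      ← dens_mul_card_mul_card]
    ring
  calc |∑ b ∈ S, ((#(nbhdIn G b N) : ℝ) - dens G B C * #N)|
      = |dens G B C - dens G S N| * (#S * #N) := by
        rw [hsum, abs_mul, abs_sub_comm, abs_of_nonneg (by positivity : (0 : ℝ) ≤ #S * #N)]
    _ ≤ ε * (#S * #N) := by gcongr; exact h S hS N hN hSε hNε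
    _ = #S * (ε * #N) := by ring

lemma card_atypical_degree_le (h : RegPair G ε B C) {N : Finset V} (hN : N ⊆ C)
    (hNε : ε * #C ≤ #N) :
    (#{b ∈ B | ε * #N < |(#(nbhdIn G b N) : ℝ) - dens G B C * #N|} : ℝ) ≤ 2 * ε * #B :=
  (card_filter_lt_abs_le_of_forall_abs_sum_le (mul_nonneg h.nonneg (by positivity))
    fun _ hS hSε ↦ h.abs_sum_card_nbhdIn_sub_le hS hN hSε hNε).trans_eq (mul_assoc _ _ _).symm

lemma card_atypical_degree_self_le (h : RegPair G ε B C) :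
    (#{b ∈ B | ε * #C < |(#(nbhdIn G b C) : ℝ) - dens G B C * #C|} : ℝ) ≤ 2 * ε * #B := by
  rcases le_or_gt ε 1 with hε | hε
  · exact h.card_atypical_degree_le Subset.rfl (mul_le_of_le_one_left (by positivity) hε)
  · calc (#{b ∈ B | ε * #C < |(#(nbhdIn G b C) : ℝ) - dens G B C * #C|} : ℝ) ≤ #B := by
          exact_mod_cast card_filter_le _ _
      _ ≤ 2 * ε * #B := le_mul_of_one_le_left (by positivity) (by linarith)

lemma card_atypical_codeg_le (h : RegPair G ε B C) {a : V} {d : ℝ} (hd : 0 ≤ d)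
    (ha : |(#(nbhdIn G a C) : ℝ) - d * #C| ≤ ε * #C) :
    (#{b ∈ B | 2 * ε * #C < |(codeg G a b C : ℝ) - d * dens G B C * #C|} : ℝ)
      ≤ 2 * ε * #B := by
  have hd' : dens G B C ∈ Set.Icc 0 1 := ⟨dens_nonneg B C, dens_le_one B C⟩
  have hNC : (#(nbhdIn G a C) : ℝ) ≤ #C := by exact_mod_cast card_le_card (nbhdIn_subset a C)
  rcases le_or_gt (ε * #C) (#(nbhdIn G a C) : ℝ) with hlarge | hsmall
  · refine le_trans ?_ (h.card_atypical_degree_le (nbhdIn_subset a C) hlarge)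
    refine Nat.cast_le.mpr (card_le_card (monotone_filter_right B fun b _ ↦ ?_))
    rw [codeg_eq_card_nbhdIn_nbhdIn]
    contrapose!
    exact fun hb ↦ abs_sub_mul_mul_le h.nonneg hd' hNC ha hb
  · have hcodeg (b : V) : (codeg G a b C : ℝ) ≤ #(nbhdIn G a C) := by
      rw [codeg_eq_card_nbhdIn_nbhdIn]
      exact_mod_cast card_le_card (nbhdIn_subset b _)
    rw [filter_false_of_mem fun b _ ↦ not_lt.mpr (abs_sub_mul_mul_le_of_le (by positivity) hd hd'
      ⟨by positivity, hcodeg b⟩ hsmall.le ha), card_empty, Nat.cast_zero]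
    exact mul_nonneg (mul_nonneg zero_le_two h.nonneg) (by positivity)

end RegPair

theorem codegree_of_regular_general {ε : ℝ} {A B C : Finset V} (hAC : RegPair G ε A C)
    (hBC : RegPair G ε B C) :
    (#{ab ∈ A ×ˢ B | 2 * ε * #C <
        |(codeg G ab.1 ab.2 C : ℝ) - dens G A C * dens G B C * #C|} : ℝ)
      ≤ 4 * ε * (#A * #B) := by
  have hε : 0 ≤ ε := hAC.nonneg
  have hpairs := card_filter_product_le (r := fun a b ↦ 2 * ε * #C <
      |(codeg G a b C : ℝ) - dens G A C * dens G B C * #C|) (by positivity : 0 ≤ 2 * ε)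
    hAC.card_atypical_degree_self_le
    fun a _ ha ↦ hBC.card_atypical_codeg_le (dens_nonneg A C) (not_lt.mp ha)
  exact hpairs.trans_eq (by ring)

end Graph

/-- **The codegree property of regular pairs (Fact 4.4).**
If `(A,C)` is `ε`-regular of density `d > 0` and `(B,C)` is `ε`-regular of density `d'`,
then, setting `ε' = 6ε/d`, all pairs `(a,b) ∈ A × B` but at most `ε'|A||B|` satisfy
`codeg(a,b) = (dd' ± ε')|C|`. -/
theorem codegree_of_regular {V : Type*} [Fintype V] [DecidableEq V] (G : SimpleGraph V)
    (A B C : Finset V) (hC : Disjoint C (A ∪ B))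
    (ε d d' : ℝ) (hε : 0 < ε) (hd : 0 < d)
    (hACd : dens G A C = d) (hAC : RegPair G ε A C)
    (hBCd : dens G B C = d') (hBC : RegPair G ε B C) :
    (((A ×ˢ B).filter fun ab =>
        ¬ ((d * d' - 6 * ε / d) * C.card ≤ (codeg G ab.1 ab.2 C : ℝ) ∧
           (codeg G ab.1 ab.2 C : ℝ) ≤ (d * d' + 6 * ε / d) * C.card)).card : ℝ) ≤
      (6 * ε / d) * ((A.card : ℝ) * B.card) := by
  subst hACd hBCd
  have hε' : 4 * ε ≤ 6 * ε / dens G A C :=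
    (by linarith : 4 * ε ≤ 6 * ε).trans (le_div_self (by positivity) hd (dens_le_one A C))
  exact (Nat.cast_le.mpr (card_filter_not_le_and_le_le (by linarith) (by positivity))).trans
    ((codegree_of_regular_general hAC hBC).trans (by gcongr))
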